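/- For every set S of n points in the plane in convex position and any two trees T, T' ∈ 𝒯(S), the tree T can be transformed into T' by a sequence of at most 4 simultaneous empty-triangle rotations. -/

import Mathlib

open scoped Classical

noncomputable section

/-- Points in the plane. -/
abbrev Pt : Type := ℝ × ℝ

/-- The closed straight-line segment spanned by an (unordered) edge. -/
def segOf (e : Sym2 Pt) : Set Pt :=
  Sym2.lift ⟨fun p q => segment ℝ p q, fun p q => segment_symm ℝ p q⟩ e

/-- The set of endpoints of an edge. -/
def epts (e : Sym2 Pt) : Set Pt := {p | p ∈ e}

/-- Two edges intersect in at most common endpoints (they do not cross). -/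
def NoCrossPair (e f : Sym2 Pt) : Prop := segOf e ∩ segOf f ⊆ epts e ∩ epts f

/-- A set of edges is noncrossing: any two distinct edges meet in at most a common endpoint. -/
def NoCross (E : Finset (Sym2 Pt)) : Prop := ∀ e ∈ E, ∀ f ∈ E, e ≠ f → NoCrossPair e f

/-- `E` is the edge set of a noncrossing straight-line spanning tree on the point set `S`:
all edges are nondegenerate with endpoints in `S`, pairwise noncrossing, there are
`|S| - 1` of them, and they connect all of `S`. -/
def IsPST (S : Finset Pt) (E : Finset (Sym2 Pt)) : Prop :=
  (∀ e ∈ E, ¬ e.IsDiag ∧ ∀ p ∈ e, p ∈ S) ∧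
  NoCross E ∧ E.card + 1 = S.card ∧
  ∀ p ∈ S, ∀ q ∈ S, Relation.ReflTransGen (fun a b => s(a, b) ∈ E) p q

/-- `S` is in general position: no three of its points are collinear. -/
def GenPos (S : Finset Pt) : Prop :=
  ∀ p ∈ S, ∀ q ∈ S, ∀ r ∈ S, p ≠ q → p ≠ r → q ≠ r → ¬ Collinear ℝ ({p, q, r} : Set Pt)

/-- `S` is in convex position: every point of `S` is a vertex of the convex hull of `S`. -/
def ConvexPos (S : Finset Pt) : Prop :=
  ∀ p ∈ S, p ∉ convexHull ℝ ((S : Set Pt) \ {p})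

/-- The open interior of the triangle with vertices `p`, `q`, `r`. -/
def triInt (p q r : Pt) : Set Pt := interior (convexHull ℝ ({p, q, r} : Set Pt))

/-- `y` can be reached from `x` by a sequence of at most `m` `step`-operations. -/
def ReachesIn {α : Type*} (step : α → α → Prop) (m : ℕ) (x y : α) : Prop :=
  ∃ k ≤ m, ∃ f : ℕ → α, f 0 = x ∧ f k = y ∧ ∀ i < k, step (f i) (f (i + 1))

/-- A simultaneous rotation from `E₁` to `E₂`: a bijection `π` between the removed and the
inserted edges such that each `e` shares an endpoint with `π e` and `π e` crosses no edge
of `E₁`. -/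
def SimRotation (S : Finset Pt) (E₁ E₂ : Finset (Sym2 Pt)) : Prop :=
  IsPST S E₁ ∧ IsPST S E₂ ∧ ∃ π : Sym2 Pt → Sym2 Pt,
    Set.BijOn π ↑(E₁ \ E₂) ↑(E₂ \ E₁) ∧
    ∀ e ∈ E₁ \ E₂, (∃ p, p ∈ e ∧ p ∈ π e) ∧ ∀ f ∈ E₁, NoCrossPair (π e) f

/-- An empty-triangle rotation replaces an edge `pq` by an adjacent edge `pr` such that
no edge of either tree meets the interior of the triangle `pqr`. -/
def EmptyTriRot (S : Finset Pt) (E₁ E₂ : Finset (Sym2 Pt)) : Prop :=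
  IsPST S E₁ ∧ IsPST S E₂ ∧ ∃ p q r : Pt,
    E₁ \ E₂ = {s(p, q)} ∧ E₂ \ E₁ = {s(p, r)} ∧
    ∀ g ∈ E₁ ∪ E₂, Disjoint (segOf g) (triInt p q r)

/-- A simultaneous empty-triangle rotation. -/
def SimEmptyTriRot (S : Finset Pt) (E₁ E₂ : Finset (Sym2 Pt)) : Prop :=
  IsPST S E₁ ∧ IsPST S E₂ ∧ ∃ π : Sym2 Pt → Sym2 Pt,
    Set.BijOn π ↑(E₁ \ E₂) ↑(E₂ \ E₁) ∧
    ∀ e ∈ E₁ \ E₂, ∃ p q r : Pt, e = s(p, q) ∧ π e = s(p, r) ∧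
      ∀ g ∈ E₁ ∪ E₂, Disjoint (segOf g) (triInt p q r)

/-- An edge slide replaces `pq` by `pr`, where `qr` is an edge of both trees and no edge of
either tree meets the interior of the triangle `pqr`. -/
def EdgeSlide (S : Finset Pt) (E₁ E₂ : Finset (Sym2 Pt)) : Prop :=
  IsPST S E₁ ∧ IsPST S E₂ ∧ ∃ p q r : Pt,
    E₁ \ E₂ = {s(p, q)} ∧ E₂ \ E₁ = {s(p, r)} ∧
    s(q, r) ∈ E₁ ∧ s(q, r) ∈ E₂ ∧
    ∀ g ∈ E₁ ∪ E₂, Disjoint (segOf g) (triInt p q r)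

/-- A simultaneous edge slide. -/
def SimEdgeSlide (S : Finset Pt) (E₁ E₂ : Finset (Sym2 Pt)) : Prop :=
  IsPST S E₁ ∧ IsPST S E₂ ∧ ∃ π : Sym2 Pt → Sym2 Pt,
    Set.BijOn π ↑(E₁ \ E₂) ↑(E₂ \ E₁) ∧
    ∀ e ∈ E₁ \ E₂, ∃ p q r : Pt, e = s(p, q) ∧ π e = s(p, r) ∧
      s(q, r) ∈ E₁ ∧ s(q, r) ∈ E₂ ∧
      ∀ g ∈ E₁ ∪ E₂, Disjoint (segOf g) (triInt p q r)

/-- `e` is an edge of the convex hull of `S`: it joins two distinct points of `S` and its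
segment lies on the boundary of the convex hull of `S`. -/
def IsHullEdge (S : Finset Pt) (e : Sym2 Pt) : Prop :=
  ∃ u v : Pt, e = s(u, v) ∧ u ∈ S ∧ v ∈ S ∧ u ≠ v ∧
    segment ℝ u v ⊆ frontier (convexHull ℝ (S : Set Pt))

/-- The spanning star centered at `v`. -/
def starAt (S : Finset Pt) (v : Pt) : Finset (Sym2 Pt) := (S.erase v).image (fun w => s(v, w))

/-- An edge-labeled tree: an edge set together with a labeling function. -/
abbrev LTree := Finset (Sym2 Pt) × (Sym2 Pt → ℕ)

/-- `T` is an edge-labeled noncrossing straight-line spanning tree on `S`: its edge set is in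
`𝒯(S)` and its labeling is a bijection from the edges onto `{1, …, |S| - 1}`
(normalized to `0` on non-edges). -/
def IsLabeledPST (S : Finset Pt) (T : LTree) : Prop :=
  IsPST S T.1 ∧ Set.BijOn T.2 ↑T.1 (Set.Icc 1 (S.card - 1)) ∧ ∀ e, e ∉ T.1 → T.2 e = 0

/-- A simultaneous exchange on edge-labeled trees: an arbitrary bijection between removed and
inserted edges transferring labels, all common edges keeping their labels. -/
def LabSimExchange (S : Finset Pt) (T₁ T₂ : LTree) : Prop :=
  IsLabeledPST S T₁ ∧ IsLabeledPST S T₂ ∧ ∃ π : Sym2 Pt → Sym2 Pt,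
    Set.BijOn π ↑(T₁.1 \ T₂.1) ↑(T₂.1 \ T₁.1) ∧
    (∀ e ∈ T₁.1 \ T₂.1, T₂.2 (π e) = T₁.2 e) ∧
    ∀ e ∈ T₁.1 ∩ T₂.1, T₂.2 e = T₁.2 e

/-- A rotation on edge-labeled trees: the removed and inserted edges share an endpoint and do
not cross, the label of the removed edge is transferred, and all other labels are kept. -/
def LabRotation (S : Finset Pt) (T₁ T₂ : LTree) : Prop :=
  IsLabeledPST S T₁ ∧ IsLabeledPST S T₂ ∧ ∃ e₁ e₂ : Sym2 Pt,
    T₁.1 \ T₂.1 = {e₁} ∧ T₂.1 \ T₁.1 = {e₂} ∧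
    (∃ p, p ∈ e₁ ∧ p ∈ e₂) ∧ NoCrossPair e₁ e₂ ∧
    T₂.2 e₂ = T₁.2 e₁ ∧ ∀ e ∈ T₁.1 ∩ T₂.1, T₂.2 e = T₁.2 e

/-- An edge slide on edge-labeled trees, transferring the label of the slid edge. -/
def LabEdgeSlide (S : Finset Pt) (T₁ T₂ : LTree) : Prop :=
  IsLabeledPST S T₁ ∧ IsLabeledPST S T₂ ∧ ∃ p q r : Pt,
    T₁.1 \ T₂.1 = {s(p, q)} ∧ T₂.1 \ T₁.1 = {s(p, r)} ∧
    s(q, r) ∈ T₁.1 ∧ s(q, r) ∈ T₂.1 ∧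
    (∀ g ∈ T₁.1 ∪ T₂.1, Disjoint (segOf g) (triInt p q r)) ∧
    T₂.2 (s(p, r)) = T₁.2 (s(p, q)) ∧ ∀ e ∈ T₁.1 ∩ T₂.1, T₂.2 e = T₁.2 e

/-!
Number the points `0, …, m` counterclockwise. In a noncrossing spanning tree every gap `(u, u + 1)`
lies below an innermost edge `a_u b_u` with `a_u ≤ u < b_u`, and `u ↦ a_u b_u` is a bijection from
the gaps to the edges. Rotating every `a_u b_u` to `u b_u` inside the triangle `a_u, u, b_u`, and
then every `u b_u` to `u (u + 1)` inside the triangle `u, u + 1, b_u`, turns the tree into the path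
`0, 1, …, m`. Every tree is thus two simultaneous rotations away from this path, and simultaneous
rotations are reversible.
-/

/-- The planar cross product, i.e. the determinant of the two column vectors. -/
def cross (v w : Pt) : ℝ := v.1 * w.2 - v.2 * w.1

/-- Twice the signed area of the triangle `pqr`: it is positive when `r` lies to the left of the
line directed from `p` to `q`. -/
def orient (p q r : Pt) : ℝ := cross (q - p) (r - p)

theorem orient_def (p q r : Pt) :
    orient p q r = (q.1 - p.1) * (r.2 - p.2) - (q.2 - p.2) * (r.1 - p.1) := rfl

theorem orient_rotate (p q r : Pt) : orient q r p = orient p q r := by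
  simp only [orient_def]; ring

theorem orient_swap_left (p q r : Pt) : orient q p r = -orient p q r := by
  simp only [orient_def]; ring

theorem orient_swap_right (p q r : Pt) : orient p r q = -orient p q r := by
  simp only [orient_def]; ring

theorem orient_self_left (p q : Pt) : orient p q p = 0 := by
  simp only [orient_def]; ring

theorem orient_self_right (p q : Pt) : orient p q q = 0 := by
  simp only [orient_def]; ring

theorem orient_convexCombination {a b : ℝ} (hab : a + b = 1) (p q x y : Pt) :
    orient p q (a • x + b • y) = a * orient p q x + b * orient p q y := by
  obtain rfl : a = 1 - b := by linarith
  simp only [orient_def, Prod.fst_add, Prod.snd_add, Prod.smul_fst, Prod.smul_snd, smul_eq_mul]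
  ring

theorem continuous_orient (p q : Pt) : Continuous (orient p q) := by
  simp only [funext (orient_def p q)]
  fun_prop

theorem isOpenMap_orient {p q : Pt} (hpq : p ≠ q) : IsOpenMap (orient p q) := by
  let φ : Pt →L[ℝ] ℝ :=
    (q - p).1 • ContinuousLinearMap.snd ℝ ℝ ℝ - (q - p).2 • ContinuousLinearMap.fst ℝ ℝ ℝ
  have hφ : φ ≠ 0 := by
    intro h
    have hx : (q - p).1 = 0 := by simpa [φ] using DFunLike.congr_fun h (0, 1)
    have hy : (q - p).2 = 0 := by simpa [φ] using DFunLike.congr_fun h (-1, 0)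
    exact hpq (sub_eq_zero.1 (Prod.ext hx hy)).symm
  exact (φ.isOpenMap_of_ne_zero hφ).comp (Homeomorph.subRight p).isOpenMap

theorem triInt_rotate (p q r : Pt) : triInt q r p = triInt p q r := by
  rw [triInt, triInt, Set.pair_comm r p, Set.insert_comm q p]

theorem triInt_swap_right (p q r : Pt) : triInt p r q = triInt p q r := by
  rw [triInt, triInt, Set.pair_comm]

theorem convexHull_triple_subset_orient_nonneg {p q r : Pt} (h : 0 ≤ orient p q r) :
    convexHull ℝ {p, q, r} ⊆ {x | 0 ≤ orient p q x} := by
  refine convexHull_min ?_ fun x hx y hy a b ha hb hab => ?_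
  · rintro x (rfl | rfl | rfl)
    exacts [(orient_self_left _ _).ge, (orient_self_right _ _).ge, h]
  · rw [Set.mem_ofPred_eq] at hx hy ⊢
    rw [orient_convexCombination hab]
    positivity

theorem orient_pos_of_mem_triInt {p q r x : Pt} (h : 0 < orient p q r) (hx : x ∈ triInt p q r) :
    0 < orient p q x := by
  have hpq : p ≠ q := by
    rintro rfl
    simp [orient_def] at h
  have hx' : x ∈ interior (orient p q ⁻¹' Set.Ici 0) :=
    interior_mono (convexHull_triple_subset_orient_nonneg h.le) hx
  rwa [← (isOpenMap_orient hpq).preimage_interior_eq_interior_preimage (continuous_orient p q),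
    interior_Ici] at hx'

theorem disjoint_segOf_triInt {p q r x y : Pt} (h : 0 < orient p q r)
    (hx : orient p q x ≤ 0) (hy : orient p q y ≤ 0) :
    Disjoint (segOf s(x, y)) (triInt p q r) := by
  refine Set.disjoint_left.2 ?_
  rintro _ ⟨a, b, ha, hb, hab, rfl⟩ hz
  refine (orient_pos_of_mem_triInt h hz).not_ge ?_
  rw [orient_convexCombination hab]
  exact add_nonpos (mul_nonpos_of_nonneg_of_nonpos ha hx) (mul_nonpos_of_nonneg_of_nonpos hb hy)

theorem noCrossPair_of_orient_nonneg {p q x y : Pt}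
    (hx : 0 ≤ orient p q x) (hy : 0 ≤ orient p q y)
    (hx₀ : orient p q x = 0 → x = p ∨ x = q) (hy₀ : orient p q y = 0 → y = p ∨ y = q)
    (hxy : x ≠ y) (hne : s(p, q) ≠ s(x, y)) : NoCrossPair s(p, q) s(x, y) := by
  rintro _ ⟨⟨a, b, -, -, hab, rfl⟩, c, d, hc, hd, hcd, hz⟩
  have horient : c * orient p q x + d * orient p q y = 0 := by
    rw [← orient_convexCombination hcd, hz, orient_convexCombination hab, orient_self_left,
      orient_self_right]
    ring
  obtain ⟨hcx, hdy⟩ := (add_eq_zero_iff_of_nonneg (mul_nonneg hc hx) (mul_nonneg hd hy)).1 horient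
  rw [← hz]
  simp only [epts, Set.mem_inter_iff, Set.mem_ofPred_eq, Sym2.mem_iff]
  rcases mul_eq_zero.1 hcx with rfl | hx'
  · obtain rfl : d = 1 := by linarith
    rcases mul_eq_zero.1 hdy with h | hy'
    · exact absurd h one_ne_zero
    · simpa using hy₀ hy'
  · rcases mul_eq_zero.1 hdy with rfl | hy'
    · obtain rfl : c = 1 := by linarith
      simpa using hx₀ hx'
    · have hends : s(p, q) = s(x, y) := by
        rcases hx₀ hx' with rfl | rfl <;> rcases hy₀ hy' with rfl | rfl <;>
          simp_all [Sym2.eq_swap]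
      exact absurd hends hne

theorem segment_inter_segment_nonempty {a b c d : Pt} (habd : 0 < orient a b d)
    (hacb : 0 < orient a c b) (hacd : 0 < orient a c d) (hcbd : 0 < orient c b d) :
    (segment ℝ a b ∩ segment ℝ c d).Nonempty := by
  have hsum : orient a b d + orient a c b = orient c b d + orient a c d := by
    simp only [orient_def]; ring
  have hpoint : orient c b d • a + orient a c d • b = orient a b d • c + orient a c b • d := by
    ext <;> simp only [orient_def, Prod.fst_add, Prod.snd_add, Prod.smul_fst, Prod.smul_snd,
      smul_eq_mul] <;> ring
  refine ⟨_, mem_segment_iff_div.2 ⟨orient c b d, orient a c d, hcbd.le, hacd.le, by positivity,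
    rfl⟩, mem_segment_iff_div.2 ⟨orient a b d, orient a c b, habd.le, hacb.le, by positivity, ?_⟩⟩
  simp only [div_eq_inv_mul, mul_smul, ← smul_add, hsum, hpoint]

theorem mem_convexHull_triple_of_orient {p q r x : Pt} (h : 0 < orient p q r)
    (hpq : 0 ≤ orient p q x) (hqr : 0 ≤ orient q r x) (hrp : 0 ≤ orient r p x) :
    x ∈ convexHull ℝ {p, q, r} := by
  let weight : Fin 3 → ℝ := ![orient q r x, orient r p x, orient p q x]
  have hsum : ∑ i, weight i = orient p q r := by
    simp only [weight, Fin.sum_univ_three, Matrix.cons_val, orient_def]; ring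
  have hx : Finset.univ.centerMass weight ![p, q, r] = x := by
    rw [Finset.centerMass, hsum, inv_smul_eq_iff₀ h.ne']
    ext <;> simp only [weight, Fin.sum_univ_three, Matrix.cons_val, orient_def, Prod.fst_add,
      Prod.snd_add, Prod.smul_fst, Prod.smul_snd, smul_eq_mul] <;> ring
  rw [← hx]
  refine Finset.centerMass_mem_convexHull _ (fun i _ => ?_) (hsum ▸ h) fun i _ => ?_
  · fin_cases i <;> assumption
  · fin_cases i <;> simp

/-- The points `f i` are the vertices of a convex polygon, listed counterclockwise. -/
structure IsCCW {ι : Type*} [LT ι] (f : ι → Pt) : Prop where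
  injective : Function.Injective f
  orient_pos : ∀ ⦃i j k⦄, i < j → j < k → 0 < orient (f i) (f j) (f k)

/-- Both `x` and `y` lie on one of the three closed arcs cut off by `i < j < k` when the linear
order is closed up to a circle, so that the chord `xy` does not enter the triangle `ijk`. -/
def OnCommonArc {ι : Type*} [Preorder ι] (i j k x y : ι) : Prop :=
  x ∈ Set.Icc i j ∧ y ∈ Set.Icc i j ∨ x ∈ Set.Icc j k ∧ y ∈ Set.Icc j k ∨
    x ∉ Set.Ioo i k ∧ y ∉ Set.Ioo i k

namespace IsCCW

variable {ι : Type*} [LinearOrder ι] {f : ι → Pt} {i j k x y : ι}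

theorem orient_neg (hf : IsCCW f) (hx : x ∈ Set.Ioo i j) : orient (f i) (f j) (f x) < 0 := by
  rw [orient_swap_right]
  exact neg_lt_zero.2 (hf.orient_pos hx.1 hx.2)

theorem orient_nonpos (hf : IsCCW f) (hx : x ∈ Set.Icc i j) : orient (f i) (f j) (f x) ≤ 0 := by
  rcases Set.eq_endpoints_or_mem_Ioo_of_mem_Icc hx with rfl | rfl | hx
  exacts [(orient_self_left _ _).le, (orient_self_right _ _).le, (hf.orient_neg hx).le]

theorem orient_nonneg (hf : IsCCW f) (hij : i < j) (hx : x ∉ Set.Ioo i j) :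
    0 ≤ orient (f i) (f j) (f x) := by
  rcases lt_trichotomy x i with hxi | rfl | hix
  · exact orient_rotate (f x) _ _ ▸ (hf.orient_pos hxi hij).le
  · exact (orient_self_left _ _).ge
  · rcases (not_lt.1 fun hxj => hx ⟨hix, hxj⟩).eq_or_lt with rfl | hjx
    exacts [(orient_self_right _ _).ge, (hf.orient_pos hij hjx).le]

theorem eq_of_orient_eq_zero (hf : IsCCW f) (hij : i < j) (h : orient (f i) (f j) (f x) = 0) :
    x = i ∨ x = j := by
  by_contra! hx
  rcases lt_or_gt_of_ne hx.1 with hxi | hix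
  · exact ((orient_rotate _ _ _).trans_ne (hf.orient_pos hxi hij).ne') h
  · rcases lt_or_gt_of_ne hx.2 with hxj | hjx
    exacts [(hf.orient_neg ⟨hix, hxj⟩).ne h, (hf.orient_pos hij hjx).ne' h]

theorem sym2_eq_iff (hf : IsCCW f) (hij : i < j) (hxy : x < y) :
    s(f i, f j) = s(f x, f y) ↔ i = x ∧ j = y := by
  simp only [Sym2.eq_iff, hf.injective.eq_iff]
  grind

theorem noCrossPair (hf : IsCCW f) (hij : i < j) (hxy : x < y) (hne : i = x → j ≠ y)
    (h : x ∈ Set.Icc i j ∧ y ∈ Set.Icc i j ∨ x ∉ Set.Ioo i j ∧ y ∉ Set.Ioo i j) :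
    NoCrossPair s(f i, f j) s(f x, f y) := by
  have hfxy : f x ≠ f y := hf.injective.ne hxy.ne
  have hedge : s(f i, f j) ≠ s(f x, f y) := by
    rw [Ne, hf.sym2_eq_iff hij hxy]
    exact fun h => hne h.1 h.2
  have hzero {z : ι} (hz : orient (f i) (f j) (f z) = 0) : f z = f i ∨ f z = f j :=
    (hf.eq_of_orient_eq_zero hij hz).imp (congrArg f) (congrArg f)
  rcases h with ⟨hx, hy⟩ | ⟨hx, hy⟩
  · rw [Sym2.eq_swap] at hedge ⊢
    refine noCrossPair_of_orient_nonneg ?_ ?_ ?_ ?_ hfxy hedge <;> rw [orient_swap_left]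
    · exact neg_nonneg.2 (hf.orient_nonpos hx)
    · exact neg_nonneg.2 (hf.orient_nonpos hy)
    all_goals exact fun hz => (hzero (neg_eq_zero.1 hz)).symm
  · exact noCrossPair_of_orient_nonneg (hf.orient_nonneg hij hx) (hf.orient_nonneg hij hy)
      hzero hzero hfxy hedge

theorem not_noCrossPair (hf : IsCCW f) {a b c d : ι} (hac : a < c) (hcb : c < b) (hbd : b < d) :
    ¬ NoCrossPair s(f a, f b) s(f c, f d) := by
  intro h
  obtain ⟨z, hz⟩ := segment_inter_segment_nonempty (hf.orient_pos (hac.trans hcb) hbd)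
    (hf.orient_pos hac hcb) (hf.orient_pos hac (hcb.trans hbd)) (hf.orient_pos hcb hbd)
  obtain ⟨hab, hcd⟩ := h hz
  simp only [epts, Set.mem_ofPred_eq, Sym2.mem_iff] at hab hcd
  rcases hab with rfl | rfl <;> grind [hf.injective.eq_iff]

theorem disjoint_segOf_triInt (hf : IsCCW f) (hij : i < j) (hjk : j < k)
    (h : OnCommonArc i j k x y) :
    Disjoint (segOf s(f x, f y)) (triInt (f i) (f j) (f k)) := by
  have hpos : 0 < orient (f i) (f j) (f k) := hf.orient_pos hij hjk
  rcases h with ⟨hx, hy⟩ | ⟨hx, hy⟩ | ⟨hx, hy⟩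
  · exact _root_.disjoint_segOf_triInt hpos (hf.orient_nonpos hx) (hf.orient_nonpos hy)
  · rw [← triInt_rotate]
    rw [← orient_rotate] at hpos
    exact _root_.disjoint_segOf_triInt hpos (hf.orient_nonpos hx) (hf.orient_nonpos hy)
  · rw [triInt_rotate (f k)]
    rw [orient_rotate (f k)] at hpos
    refine _root_.disjoint_segOf_triInt hpos ?_ ?_ <;> rw [orient_swap_left, neg_nonpos]
    exacts [hf.orient_nonneg (hij.trans hjk) hx, hf.orient_nonneg (hij.trans hjk) hy]

end IsCCW

theorem zero_lt_toLex_iff {v : Pt} : 0 < toLex v ↔ 0 < v.1 ∨ v.1 = 0 ∧ 0 < v.2 := by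
  simp [Prod.Lex.lt_iff, eq_comm]

theorem sameRay_of_cross_eq_zero {v w : Pt} (hv : 0 < toLex v) (hw : 0 < toLex w)
    (h : cross v w = 0) : SameRay ℝ v w := by
  rw [zero_lt_toLex_iff] at hv hw
  rw [cross] at h
  rcases hv with hv | ⟨hv, hv'⟩
  · have hw₁ : 0 < w.1 := by
      rcases hw with hw | ⟨hw, hw'⟩
      · exact hw
      · simp [hw, hv.ne', hw'.ne'] at h
    refine Or.inr (Or.inr ⟨w.1, v.1, hw₁, hv, Prod.ext (mul_comm _ _) ?_⟩)
    simp only [Prod.smul_snd, smul_eq_mul]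
    linarith
  · have hw₁ : w.1 = 0 := by simpa [hv, hv'.ne'] using h
    have hw₂ : 0 < w.2 := by simpa [hw₁] using hw
    exact Or.inr (Or.inr ⟨w.2, v.2, hw₂, hv', Prod.ext (by simp [hv, hw₁]) (mul_comm _ _)⟩)

-- Lexicographically positive vectors lie in a half-plane, so `cross` sorts them by angle.
theorem cross_pos_trans {u v w : Pt} (hu : 0 < toLex u) (hv : 0 < toLex v) (hw : 0 < toLex w)
    (huv : 0 < cross u v) (hvw : 0 < cross v w) : 0 < cross u w := by
  rw [zero_lt_toLex_iff] at hu hv hw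
  have fst_pos {x y : Pt} (hx : 0 < x.1 ∨ x.1 = 0 ∧ 0 < x.2) (hy : 0 ≤ y.1)
      (hxy : 0 < cross x y) : 0 < x.1 := by
    refine hx.resolve_right fun ⟨hx₁, hx₂⟩ => hxy.not_ge ?_
    rw [cross, hx₁, zero_mul, zero_sub]
    exact neg_nonpos.2 (mul_nonneg hx₂.le hy)
  have hw₁ : 0 ≤ w.1 := hw.elim le_of_lt fun h => h.1.ge
  have hv₁ : 0 < v.1 := fst_pos hv hw₁ hvw
  have hu₁ : 0 < u.1 := fst_pos hu hv₁.le huv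
  have hpluecker : cross u w * v.1 = cross v w * u.1 + cross u v * w.1 := by
    simp only [cross]; ring
  exact pos_of_mul_pos_left (hpluecker ▸ by positivity) hv₁.le

theorem exists_enum_of_isStrictTotalOrder {α : Type*} [Fintype α] (r : α → α → Prop)
    [IsStrictTotalOrder α r] {n : ℕ} (hn : Fintype.card α = n) :
    ∃ e : Fin n ≃ α, ∀ i j, i < j → r (e i) (e j) := by
  let _ : LinearOrder α := linearOrderOfSTO r
  let e := Fintype.orderIsoFinOfCardEq α hn
  exact ⟨e.toEquiv, fun i j h => e.lt_iff_lt.2 h⟩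

namespace ConvexPos

variable {S : Finset Pt} {o : Pt}

theorem orient_ne_zero (hS : ConvexPos S) (ho : o ∈ S) {q r : Pt} (hq : q ∈ S) (hr : r ∈ S)
    (hoq : toLex o < toLex q) (hor : toLex o < toLex r) (hqr : q ≠ r) : orient o q r ≠ 0 := by
  intro h
  have hnotMem {x y : Pt} (hx : x ∈ S) (hy : y ∈ S) (hox : toLex o < toLex x) (hxy : x ≠ y) :
      x ∉ segment ℝ o y := fun hmem =>
    hS x hx (segment_subset_convexHull (s := (S : Set Pt) \ {x})
      ⟨ho, fun hoo => hox.ne (congrArg toLex hoo)⟩ ⟨hy, hxy.symm⟩ hmem)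
  have hray : SameRay ℝ (q -ᵥ o) (r -ᵥ o) :=
    sameRay_of_cross_eq_zero (sub_pos.2 hoq) (sub_pos.2 hor) h
  rcases wbtw_total_of_sameRay_vsub_left hray with hw | hw
  · exact hnotMem hq hr hoq hqr (mem_segment_iff_wbtw.2 hw)
  · exact hnotMem hr hq hor hqr.symm (mem_segment_iff_wbtw.2 hw)

theorem isStrictTotalOrder_orient (hS : ConvexPos S) (ho : o ∈ S)
    (hmin : ∀ q ∈ S.erase o, toLex o < toLex q) :
    IsStrictTotalOrder (S.erase o) fun q r => 0 < orient o q r where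
  irrefl q := (orient_self_right o q).not_gt
  trans q r t hqr hrt := cross_pos_trans (sub_pos.2 (hmin q q.2)) (sub_pos.2 (hmin r r.2))
    (sub_pos.2 (hmin t t.2)) hqr hrt
  trichotomous q r hqr hrq := by
    by_contra hne
    refine hS.orient_ne_zero ho (Finset.mem_of_mem_erase q.2) (Finset.mem_of_mem_erase r.2)
      (hmin q q.2) (hmin r r.2) (Subtype.coe_ne_coe.2 hne) (le_antisymm (not_lt.1 hqr) ?_)
    rw [orient_swap_right] at hrq
    linarith

theorem orient_pos_of_orient_pos (hS : ConvexPos S) {p q r : Pt} (ho : o ∈ S) (hp : p ∈ S)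
    (hq : q ∈ S) (hr : r ∈ S) (hpq : 0 < orient o p q) (hqr : 0 < orient o q r)
    (hpr : 0 < orient o p r) : 0 < orient p q r := by
  by_contra! h
  have hmem : q ∈ convexHull ℝ {o, p, r} := by
    refine mem_convexHull_triple_of_orient hpr hpq.le ?_ ?_
    · rw [orient_swap_right]
      exact neg_nonneg.2 h
    · rw [orient_rotate q r o, orient_rotate o q r]
      exact hqr.le
  have hoq : o ≠ q := by rintro rfl; simp [orient_self_left] at hpq
  have hpq' : p ≠ q := by rintro rfl; simp [orient_self_right] at hpq
  have hrq : r ≠ q := by rintro rfl; simp [orient_self_right] at hqr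
  refine hS q hq (convexHull_mono ?_ hmem)
  rintro x (rfl | rfl | rfl)
  exacts [⟨ho, hoq⟩, ⟨hp, hpq'⟩, ⟨hr, hrq⟩]

theorem exists_isCCW (hS : ConvexPos S) {m : ℕ} (hm : S.card = m + 1) :
    ∃ f : Fin (m + 1) → Pt, IsCCW f ∧ Finset.univ.image f = S := by
  obtain ⟨o, ho, hle⟩ := S.exists_min_image toLex (Finset.card_pos.1 (by omega))
  have hmin : ∀ q ∈ S.erase o, toLex o < toLex q := fun q hq =>
    (hle q (Finset.mem_of_mem_erase hq)).lt_of_ne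
      (toLex.injective.ne (Finset.ne_of_mem_erase hq).symm)
  have := hS.isStrictTotalOrder_orient ho hmin
  obtain ⟨e, he⟩ := exists_enum_of_isStrictTotalOrder (α := S.erase o)
    (fun q r => 0 < orient o q r) (n := m) (by simp [ho, hm])
  have hmem (i : Fin m) : (e i : Pt) ∈ S := Finset.mem_of_mem_erase (e i).2
  have hrange : Set.range (fun i => (e i : Pt)) = (S.erase o : Finset Pt) := by
    rw [← Function.comp_def, e.surjective.range_comp, Subtype.range_coe]
  refine ⟨Fin.cons o fun i => (e i : Pt), ⟨?_, ?_⟩, ?_⟩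
  · refine Fin.cons_injective_iff.2 ⟨?_, Subtype.val_injective.comp e.injective⟩
    simp [hrange]
  · intro i j k hij hjk
    obtain ⟨j, rfl⟩ := Fin.exists_succ_eq.2 (Fin.ne_zero_of_lt hij)
    obtain ⟨k, rfl⟩ := Fin.exists_succ_eq.2 (Fin.ne_zero_of_lt hjk)
    rw [Fin.succ_lt_succ_iff] at hjk
    cases i using Fin.cases with
    | zero => exact he j k hjk
    | succ i =>
      rw [Fin.succ_lt_succ_iff] at hij
      exact hS.orient_pos_of_orient_pos ho (hmem i) (hmem j) (hmem k) (he i j hij) (he j k hjk)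
        (he i k (hij.trans hjk))
  · rw [← Finset.coe_inj, Finset.coe_image, Finset.coe_univ, Set.image_univ, Fin.range_cons,
      hrange, ← Finset.coe_insert, Finset.insert_erase ho]

end ConvexPos

/-- The graph `G` on a linear order has no two interleaving edges, so it can be drawn without
crossings by chords between points that are placed in this order on a circle. -/
def IsNoncrossing {ι : Type*} [LinearOrder ι] (G : SimpleGraph ι) : Prop :=
  ∀ ⦃a b c d⦄, G.Adj a b → G.Adj c d → a < c → c < b → b < d → False

/-- The edge `ab` of `G` passes over the gap between `u` and the elements above `u`, and it is
nested inside every other edge that does so. -/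
structure IsInnermostCover {ι : Type*} [LinearOrder ι] (G : SimpleGraph ι) (u a b : ι) : Prop where
  adj : G.Adj a b
  le : a ≤ u
  lt : u < b
  nested : ∀ ⦃c d⦄, G.Adj c d → c ≤ u → u < d → c ≤ a ∧ b ≤ d

section InnermostCover

variable {ι : Type*} [LinearOrder ι] {G : SimpleGraph ι} {u w a b c d : ι}

theorem exists_adj_mem_notMem {V : Type*} {G : SimpleGraph V} (hG : G.Preconnected) {s : Set V}
    {x y : V} (hx : x ∈ s) (hy : y ∉ s) : ∃ c ∈ s, ∃ d ∉ s, G.Adj c d := by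
  obtain ⟨p⟩ := hG x y
  obtain ⟨e, -, he₁, he₂⟩ := p.exists_boundary_dart s hx hy
  exact ⟨e.fst, he₁, e.snd, he₂, e.adj⟩

theorem IsNoncrossing.exists_isInnermostCover [Finite ι] (hG : IsNoncrossing G)
    (hconn : G.Preconnected) (hu : ¬ IsMax u) : ∃ a b, IsInnermostCover G u a b := by
  let cover : Set (ι × ι) := {e | G.Adj e.1 e.2 ∧ e.1 ≤ u ∧ u < e.2}
  have hne : cover.Nonempty := by
    obtain ⟨v, huv⟩ := not_isMax_iff.1 hu
    obtain ⟨c, hc, d, hd, hcd⟩ :=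
      exists_adj_mem_notMem hconn (s := Set.Iic u) Set.self_mem_Iic (not_le.2 huv)
    exact ⟨(c, d), hcd, hc, not_le.1 hd⟩
  -- Among the covering edges take the rightmost left end, then the leftmost right end.
  obtain ⟨⟨a, b⟩, ⟨hab, hau, hub⟩, hmax⟩ :=
    cover.exists_max_image (fun e => toLex (e.1, OrderDual.toDual e.2)) cover.toFinite hne
  refine ⟨a, b, hab, hau, hub, fun c d hcd hcu hud => ?_⟩
  have hle := hmax (c, d) ⟨hcd, hcu, hud⟩
  have hnc := hG hcd hab
  simp only [Prod.Lex.toLex_le_toLex, OrderDual.toDual_le_toDual] at hle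
  grind

namespace IsInnermostCover

theorem eq (hu : IsInnermostCover G u a b) (hw : IsInnermostCover G w a b)
    (hconn : G.Preconnected) : u = w := by
  wlog huw : u < w generalizing u w
  · by_contra hne
    exact hne (this hw hu (by order)).symm
  -- An edge leaving `Ioc u w` passes over one of the gaps at `u` and `w` without containing `ab`.
  obtain ⟨c, hc, d, hd, hcd⟩ :=
    exists_adj_mem_notMem hconn (s := Set.Ioc u w) ⟨huw, le_rfl⟩ (fun h => h.1.false)
  have h₁ := hu.nested hcd.symm
  have h₂ := hw.nested hcd
  have := hu.le
  have := hw.lt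
  grind

theorem le_of_lt (hu : IsInnermostCover G u a b) (hw : IsInnermostCover G w c d) (huw : u < w)
    (hwb : w < b) : d ≤ b :=
  (hw.nested hu.adj (hu.le.trans huw.le) hwb).2

theorem onCommonArc_of_adj (hu : IsInnermostCover G u a b) (hG : IsNoncrossing G)
    (hcd : G.Adj c d) (hlt : c < d) :
    OnCommonArc a u b c d := by
  have h₁ := hG hu.adj hcd
  have h₂ := hG hcd hu.adj
  have h₃ := hu.nested hcd
  have := hu.le
  have := hu.lt
  grind [OnCommonArc]

theorem onCommonArc_spoke (hu : IsInnermostCover G u a b) (hw : IsInnermostCover G w c d)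
    (hG : IsNoncrossing G) (hconn : G.Preconnected) : OnCommonArc a u b w d := by
  -- In the critical case `a < w < u < d` the edges `ab` and `cd` are nested in each other.
  have heq : a = c → b = d → u = w := by
    rintro rfl rfl
    exact hu.eq hw hconn
  have h₁ := hG hw.adj hu.adj
  have h₂ := hu.nested hw.adj
  have h₃ := hw.nested hu.adj
  have := hu.le
  have := hu.lt
  have := hw.le
  have := hw.lt
  grind [OnCommonArc]

end IsInnermostCover

end InnermostCover

/-- The graph on the indices `ι` whose edges are the segments of `E` between the points `f i`. -/
def indexGraph {ι : Type*} (f : ι → Pt) (E : Finset (Sym2 Pt)) : SimpleGraph ι :=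
  (SimpleGraph.fromEdgeSet (E : Set (Sym2 Pt))).comap f

theorem indexGraph_adj {ι : Type*} {f : ι → Pt} {E : Finset (Sym2 Pt)} {i j : ι} :
    (indexGraph f E).Adj i j ↔ s(f i, f j) ∈ E ∧ f i ≠ f j := by
  simp [indexGraph]

theorem IsCCW.isNoncrossing_indexGraph {ι : Type*} [LinearOrder ι] {f : ι → Pt} (hf : IsCCW f)
    {E : Finset (Sym2 Pt)} (hE : NoCross E) : IsNoncrossing (indexGraph f E) := by
  intro a b c d hab hcd hac hcb hbd
  rw [indexGraph_adj] at hab hcd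
  refine hf.not_noCrossPair hac hcb hbd (hE _ hab.1 _ hcd.1 fun h => ?_)
  exact hac.ne ((hf.sym2_eq_iff (hac.trans hcb) (hcb.trans hbd)).1 h).1

theorem IsPST.preconnected_indexGraph {ι : Type*} [Fintype ι] {f : ι → Pt}
    (hf : Function.Injective f) {E : Finset (Sym2 Pt)} (hE : IsPST (Finset.univ.image f) E) :
    (indexGraph f E).Preconnected := by
  have hmem (i : ι) : f i ∈ Finset.univ.image f := Finset.mem_image_of_mem f (Finset.mem_univ i)
  intro i j
  have hlift {x : Pt} (h : Relation.ReflTransGen (fun p q => s(p, q) ∈ E) (f i) x) :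
      ∃ k, f k = x ∧ (indexGraph f E).Reachable i k := by
    induction h with
    | refl => exact ⟨i, rfl, .refl i⟩
    | @tail _ y _ hedge ih =>
      obtain ⟨k, rfl, hik⟩ := ih
      obtain ⟨hdiag, hends⟩ := hE.1 _ hedge
      obtain ⟨l, -, rfl⟩ := Finset.mem_image.1 (hends y (Sym2.mem_mk_right _ _))
      rw [Sym2.mk_isDiag_iff] at hdiag
      exact ⟨l, rfl, hik.trans (indexGraph_adj.2 ⟨hedge, hdiag⟩).reachable⟩
  obtain ⟨k, hk, hik⟩ := hlift (hE.2.2.2 _ (hmem i) _ (hmem j))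
  rwa [hf hk] at hik

theorem exists_bijOn_range_sdiff_range {κ α : Type*} {e₁ e₂ : κ → α} (h₁ : Function.Injective e₁)
    (h₂ : Function.Injective e₂) (h₁₂ : ∀ u w, e₁ u = e₂ w → u = w) :
    ∃ π : α → α, Set.BijOn π (Set.range e₁ \ Set.range e₂) (Set.range e₂ \ Set.range e₁) ∧
      ∀ u, π (e₁ u) = e₂ u := by
  let moved : Set κ := {u | e₁ u ≠ e₂ u}
  have hdiff₁ : Set.range e₁ \ Set.range e₂ = e₁ '' moved := by grind
  have hdiff₂ : Set.range e₂ \ Set.range e₁ = e₂ '' moved := by grind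
  let π : α → α := Function.extend e₁ e₂ id
  have hπ : π ∘ e₁ = e₂ := Function.extend_comp h₁ e₂ id
  have himage : π '' (e₁ '' moved) = e₂ '' moved := by rw [← Set.image_comp, hπ]
  refine ⟨π, ?_, congrFun hπ⟩
  rw [hdiff₁, hdiff₂, ← himage]
  refine Set.InjOn.bijOn_image (Set.InjOn.image_of_comp ?_)
  rw [hπ]
  exact h₂.injOn

theorem simEmptyTriRot_image {S : Finset Pt} {κ : Type*} [Fintype κ] {e₁ e₂ : κ → Sym2 Pt}
    (hS₁ : IsPST S (Finset.univ.image e₁)) (hS₂ : IsPST S (Finset.univ.image e₂))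
    (h₁ : Function.Injective e₁) (h₂ : Function.Injective e₂) (h₁₂ : ∀ u w, e₁ u = e₂ w → u = w)
    (hrot : ∀ u, e₁ u ≠ e₂ u → ∃ p q r, e₁ u = s(p, q) ∧ e₂ u = s(p, r) ∧
      ∀ w, Disjoint (segOf (e₁ w)) (triInt p q r) ∧ Disjoint (segOf (e₂ w)) (triInt p q r)) :
    SimEmptyTriRot S (Finset.univ.image e₁) (Finset.univ.image e₂) := by
  obtain ⟨π, hπ, hπe⟩ := exists_bijOn_range_sdiff_range h₁ h₂ h₁₂
  refine ⟨hS₁, hS₂, π, by simpa using hπ, fun e he => ?_⟩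
  simp only [Finset.mem_sdiff, Finset.mem_image, Finset.mem_univ, true_and] at he
  obtain ⟨⟨u, rfl⟩, hu⟩ := he
  obtain ⟨p, q, r, hpq, hpr, hempty⟩ := hrot u fun h => hu ⟨u, h.symm⟩
  refine ⟨p, q, r, hpq, (hπe u).trans hpr, fun g hg => ?_⟩
  simp only [Finset.mem_union, Finset.mem_image, Finset.mem_univ, true_and] at hg
  rcases hg with ⟨w, rfl⟩ | ⟨w, rfl⟩
  exacts [(hempty w).1, (hempty w).2]

theorem SimEmptyTriRot.symm {S : Finset Pt} {E₁ E₂ : Finset (Sym2 Pt)}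
    (h : SimEmptyTriRot S E₁ E₂) : SimEmptyTriRot S E₂ E₁ := by
  obtain ⟨h₁, h₂, π, hπ, hrot⟩ := h
  have hinv := hπ.invOn_invFunOn
  refine ⟨h₂, h₁, Function.invFunOn π ↑(E₁ \ E₂), hπ.symm hinv.symm, fun e he => ?_⟩
  obtain ⟨e', he', rfl⟩ := hπ.surjOn he
  obtain ⟨p, q, r, hpq, hpr, hempty⟩ := hrot e' he'
  refine ⟨p, r, q, hpr, (hinv.1 he').trans hpq, fun g hg => ?_⟩
  rw [triInt_swap_right]
  exact hempty g (Finset.union_comm E₁ E₂ ▸ hg)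

/-- A choice of a parent `b u` after every vertex `u` but the last, such that the arcs from the
vertices to their parents are pairwise noncrossing. -/
structure IsNestedParent {m : ℕ} (b : Fin m → Fin (m + 1)) : Prop where
  lt : ∀ u, u.castSucc < b u
  le : ∀ u w, u < w → w.castSucc < b u → b w ≤ b u

/-- The edges joining every point `f u` but the last to its parent `f (b u)`. -/
def parentTree {m : ℕ} (f : Fin (m + 1) → Pt) (b : Fin m → Fin (m + 1)) : Finset (Sym2 Pt) :=
  Finset.univ.image fun u => s(f u.castSucc, f (b u))

theorem isNestedParent_succ (m : ℕ) : IsNestedParent (Fin.succ : Fin m → Fin (m + 1)) where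
  lt _ := Fin.castSucc_lt_succ
  le u w huw hw := by grind

namespace IsNestedParent

variable {m : ℕ} {b : Fin m → Fin (m + 1)} {f : Fin (m + 1) → Pt}

theorem injective_edge (hb : IsNestedParent b) (hf : IsCCW f) :
    Function.Injective fun u => s(f u.castSucc, f (b u)) := fun u w h =>
  Fin.castSucc_injective m ((hf.sym2_eq_iff (hb.lt u) (hb.lt w)).1 h).1

theorem noCross_parentTree (hb : IsNestedParent b) (hf : IsCCW f) :
    NoCross (parentTree f b) := by
  intro e he g hg hne
  obtain ⟨u, -, rfl⟩ := Finset.mem_image.1 he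
  obtain ⟨w, -, rfl⟩ := Finset.mem_image.1 hg
  refine hf.noCrossPair (hb.lt u) (hb.lt w) ?_ ?_
  · rintro huw -
    exact hne (by rw [Fin.castSucc_injective m huw])
  · have h₁ := hb.le u w
    have h₂ := hb.le w u
    have := hb.lt u
    have := hb.lt w
    grind

theorem reflTransGen_last (hb : IsNestedParent b) (f : Fin (m + 1) → Pt) (i : Fin (m + 1)) :
    Relation.ReflTransGen (fun p q => s(p, q) ∈ parentTree f b) (f i) (f (Fin.last m)) := by
  induction i using WellFoundedGT.induction with
  | ind i ih =>
    rcases i.eq_castSucc_or_eq_last with ⟨u, rfl⟩ | rfl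
    · exact .head (Finset.mem_image_of_mem _ (Finset.mem_univ u)) (ih (b u) (hb.lt u))
    · exact .refl

theorem isPST_parentTree (hb : IsNestedParent b) (hf : IsCCW f) :
    IsPST (Finset.univ.image f) (parentTree f b) := by
  refine ⟨fun e he => ?_, hb.noCross_parentTree hf, ?_, fun p hp q hq => ?_⟩
  · obtain ⟨u, -, rfl⟩ := Finset.mem_image.1 he
    simp [hf.injective.eq_iff, (hb.lt u).ne]
  · rw [parentTree, Finset.card_image_of_injective _ (hb.injective_edge hf),
      Finset.card_image_of_injective _ hf.injective]
    simp
  · obtain ⟨i, -, rfl⟩ := Finset.mem_image.1 hp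
    obtain ⟨j, -, rfl⟩ := Finset.mem_image.1 hq
    have : Std.Symm fun p q => s(p, q) ∈ parentTree f b := ⟨fun p q h => Sym2.eq_swap ▸ h⟩
    exact (hb.reflTransGen_last f i).trans (symm (hb.reflTransGen_last f j))

theorem simEmptyTriRot_succ (hb : IsNestedParent b) (hf : IsCCW f) :
    SimEmptyTriRot (Finset.univ.image f) (parentTree f b) (parentTree f Fin.succ) := by
  have hsucc := isNestedParent_succ m
  refine simEmptyTriRot_image (hb.isPST_parentTree hf) (hsucc.isPST_parentTree hf)
    (hb.injective_edge hf) (hsucc.injective_edge hf) (fun u w h => ?_) fun u hu => ?_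
  · exact Fin.castSucc_injective m ((hf.sym2_eq_iff (hb.lt u) (hsucc.lt w)).1 h).1
  · have hlt : u.succ < b u :=
      (Fin.castSucc_lt_iff_succ_le.1 (hb.lt u)).lt_of_ne fun h => hu (by simp only [h])
    refine ⟨f u.castSucc, f (b u), f u.succ, rfl, rfl, fun w => ?_⟩
    rw [← triInt_swap_right]
    have h₁ := hb.le u w
    have h₂ := hb.le w u
    have := hb.lt w
    constructor <;> refine hf.disjoint_segOf_triInt Fin.castSucc_lt_succ hlt ?_
    · grind [OnCommonArc]
    · grind [OnCommonArc]

end IsNestedParent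

namespace IsPST

variable {m : ℕ} {f : Fin (m + 1) → Pt} {E : Finset (Sym2 Pt)} {a b : Fin m → Fin (m + 1)}

theorem exists_isInnermostCover (hE : IsPST (Finset.univ.image f) E) (hf : IsCCW f) :
    ∃ a b : Fin m → Fin (m + 1),
      ∀ u, IsInnermostCover (indexGraph f E) u.castSucc (a u) (b u) := by
  have h (u : Fin m) : ∃ a b, IsInnermostCover (indexGraph f E) u.castSucc a b :=
    (hf.isNoncrossing_indexGraph hE.2.1).exists_isInnermostCover
      (hE.preconnected_indexGraph hf.injective) (not_isMax_of_lt Fin.castSucc_lt_succ)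
  choose a b hab using h
  exact ⟨a, b, hab⟩

theorem injective_innermostEdge (hE : IsPST (Finset.univ.image f) E) (hf : IsCCW f)
    (hab : ∀ u, IsInnermostCover (indexGraph f E) u.castSucc (a u) (b u)) :
    Function.Injective fun u => s(f (a u), f (b u)) := by
  intro u w h
  obtain ⟨ha, hb⟩ := (hf.sym2_eq_iff ((hab u).le.trans_lt (hab u).lt)
    ((hab w).le.trans_lt (hab w).lt)).1 h
  have hw := hab w
  rw [← ha, ← hb] at hw
  exact Fin.castSucc_injective m ((hab u).eq hw (hE.preconnected_indexGraph hf.injective))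

theorem image_innermostEdge (hE : IsPST (Finset.univ.image f) E) (hf : IsCCW f)
    (hab : ∀ u, IsInnermostCover (indexGraph f E) u.castSucc (a u) (b u)) :
    Finset.univ.image (fun u => s(f (a u), f (b u))) = E := by
  refine Finset.eq_of_subset_of_card_le (Finset.image_subset_iff.2 fun u _ =>
    (indexGraph_adj.1 (hab u).adj).1) ?_
  have hcard := hE.2.2.1
  rw [Finset.card_image_of_injective _ hf.injective, Finset.card_fin] at hcard
  rw [Finset.card_image_of_injective _ (hE.injective_innermostEdge hf hab), Finset.card_fin]
  omega

theorem exists_simEmptyTriRot_parentTree (hE : IsPST (Finset.univ.image f) E) (hf : IsCCW f) :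
    ∃ b : Fin m → Fin (m + 1), IsNestedParent b ∧
      SimEmptyTriRot (Finset.univ.image f) E (parentTree f b) := by
  obtain ⟨a, b, hab⟩ := hE.exists_isInnermostCover hf
  have hG : IsNoncrossing (indexGraph f E) := hf.isNoncrossing_indexGraph hE.2.1
  have hconn : (indexGraph f E).Preconnected := hE.preconnected_indexGraph hf.injective
  have hb : IsNestedParent b :=
    ⟨fun u => (hab u).lt, fun u w huw => (hab u).le_of_lt (hab w) huw⟩
  have hlt (u : Fin m) : a u < b u := (hab u).le.trans_lt (hab u).lt
  have himage := hE.image_innermostEdge hf hab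
  refine ⟨b, hb, himage ▸ simEmptyTriRot_image (himage.symm ▸ hE) (hb.isPST_parentTree hf)
    (hE.injective_innermostEdge hf hab) (hb.injective_edge hf) (fun u w h => ?_) fun u hu => ?_⟩
  · obtain ⟨haw, hbw⟩ := (hf.sym2_eq_iff (hlt u) (hb.lt w)).1 h
    have hle : a u ≤ a w := ((hab w).nested (hab u).adj haw.le (hbw ▸ (hab w).lt)).1
    have ha : a u = a w := hle.antisymm (haw ▸ (hab w).le)
    exact hE.injective_innermostEdge hf hab (by simp only [ha, hbw])
  · have hau : a u < u.castSucc := (hab u).le.lt_of_ne fun h => hu (by simp only [h])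
    refine ⟨f (b u), f (a u), f u.castSucc, Sym2.eq_swap, Sym2.eq_swap, fun w => ?_⟩
    rw [← triInt_rotate]
    exact ⟨hf.disjoint_segOf_triInt hau (hab u).lt
        ((hab u).onCommonArc_of_adj hG (hab w).adj (hlt w)),
      hf.disjoint_segOf_triInt hau (hab u).lt ((hab u).onCommonArc_spoke (hab w) hG hconn)⟩

end IsPST

/-- on points in convex position, any two trees are connected by at most `4`
simultaneous empty-triangle rotations. -/
theorem stmt_6 :
    ∀ S : Finset Pt, ConvexPos S →
      ∀ E E' : Finset (Sym2 Pt), IsPST S E → IsPST S E' →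
        ReachesIn (SimEmptyTriRot S) 4 E E' := by
  intro S hS E E' hE hE'
  obtain ⟨f, hf, rfl⟩ := hS.exists_isCCW hE.2.2.1.symm
  obtain ⟨b, hb, hEb⟩ := hE.exists_simEmptyTriRot_parentTree hf
  obtain ⟨b', hb', hEb'⟩ := hE'.exists_simEmptyTriRot_parentTree hf
  let trees : ℕ → Finset (Sym2 Pt)
    | 0 => E
    | 1 => parentTree f b
    | 2 => parentTree f Fin.succ
    | 3 => parentTree f b'
    | _ => E'
  refine ⟨4, le_rfl, trees, rfl, rfl, fun i hi => ?_⟩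
  interval_cases i
  · exact hEb
  · exact hb.simEmptyTriRot_succ hf
  · exact (hb'.simEmptyTriRot_succ hf).symm
  · exact hEb'.symm
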